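/- There exists a polynomial q with natural-number coefficients such that the following holds: let V be a 2-VASS with n control states and norm M, let K ∈ ℕ, and let ρ be a run of V such that for some fixed coordinate j ∈ {1,2}, the j-th coordinate of the vector of every configuration in ρ is smaller than K, and such that ‖trg(ρ)‖ > ‖src(ρ)‖ + K·n·M. Then some configuration in ρ enables a cycle whose effect is vertical or horizontal and whose length is at most q(K·n·M). -/

import Mathlib

/-- Integer vectors in the plane. -/
abbrev Vec2 : Type := ℤ × ℤ

/-- The norm of a vector: the maximum of the absolute values of its coordinates. -/
def vnorm (v : Vec2) : ℕ := max v.1.natAbs v.2.natAbs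

/-- A vector is positive if both coordinates are positive. -/
def Pos (v : Vec2) : Prop := 0 < v.1 ∧ 0 < v.2

/-- A vector is semi-positive if both coordinates are nonnegative and one is positive. -/
def SemiPos (v : Vec2) : Prop := 0 ≤ v.1 ∧ 0 ≤ v.2 ∧ (0 < v.1 ∨ 0 < v.2)

/-- A vector is vertical if it is of the form (0, a) with a > 0. -/
def Vert (v : Vec2) : Prop := v.1 = 0 ∧ 0 < v.2

/-- A vector is horizontal if it is of the form (a, 0) with a > 0. -/
def Horiz (v : Vec2) : Prop := 0 < v.1 ∧ v.2 = 0

/-- Embedding of integer vectors into the rational plane. -/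
def toQ (v : Vec2) : ℚ × ℚ := ((v.1 : ℚ), (v.2 : ℚ))

/-- The half-line (ray) ℚ≥0 · x generated by a rational vector x. -/
def rayQ (x : ℚ × ℚ) : Set (ℚ × ℚ) := {z | ∃ a : ℚ, 0 ≤ a ∧ z = a • x}

/-- The cone of a finite list of integer vectors: all nonnegative rational
linear combinations. -/
def Cone (vs : List Vec2) : Set (ℚ × ℚ) :=
  {x | ∃ a : Fin vs.length → ℚ, (∀ i, 0 ≤ a i) ∧ x = ∑ i, a i • toQ (vs.get i)}

/-- The sequential cone: nonnegative rational combinations all of whose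
partial sums are in the nonnegative orthant. -/
def SeqCone (vs : List Vec2) : Set (ℚ × ℚ) :=
  {x | ∃ a : Fin vs.length → ℚ, (∀ i, 0 ≤ a i) ∧
    (∀ k : ℕ, k ≤ vs.length →
      0 ≤ ∑ i : Fin vs.length, if (i : ℕ) < k then a i • toQ (vs.get i) else 0) ∧
    x = ∑ i, a i • toQ (vs.get i)}

/-- Two integer vectors are colinear if they generate the same half-line. -/
def Colinear (v w : Vec2) : Prop := rayQ (toQ v) = rayQ (toQ w)

/-- The clockwise relation on nonnegative vectors:
`Clk v u` iff u lies strictly clockwise from v. -/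
def Clk (v u : Vec2) : Prop := 0 < v.2 * u.1 - v.1 * u.2

/-- Projection of a vector on coordinate `j` (`Fin 2` indexes the two coordinates). -/
def proj (j : Fin 2) (v : Vec2) : ℤ := if j = 0 then v.1 else v.2

/-! ### 2-dimensional vector addition systems with states (2-VASS) -/

/-- A transition of a 2-VASS with control states `Fin n`:
a source state, an effect vector, and a target state. -/
abbrev Transition (n : ℕ) : Type := Fin n × Vec2 × Fin n

/-- A 2-VASS with control states `Fin n` is a finite set of transitions. -/
abbrev VASS (n : ℕ) : Type := Finset (Transition n)

/-- The norm of a 2-VASS: the largest norm of an effect of a transition. -/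
def vassNorm {n : ℕ} (V : VASS n) : ℕ := V.sup (fun t => vnorm t.2.1)

/-- The effect of a sequence of transitions: the sum of the individual effects. -/
def effect {n : ℕ} (π : List (Transition n)) : Vec2 := (π.map (fun t => t.2.1)).sum

/-- A path of `V`: a sequence of transitions of `V` in which
consecutive control states match. -/
def IsPath {n : ℕ} (V : VASS n) (π : List (Transition n)) : Prop :=
  (∀ t ∈ π, t ∈ V) ∧ π.Chain' (fun s t => s.2.2 = t.1)

/-- The path `π` starts at control state `q` (vacuously true for the empty path). -/
def startsAt {n : ℕ} (π : List (Transition n)) (q : Fin n) : Prop :=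
  ∀ t ∈ π.head?, t.1 = q

/-- The control state after the first `i` transitions of `π`, for a path
starting at control state `q`. -/
def stateAt {n : ℕ} (π : List (Transition n)) (q : Fin n) (i : ℕ) : Fin n :=
  (((π.take i).getLast?).map (fun t => t.2.2)).getD q

/-- The final control state of a path `π` starting at control state `q`. -/
def endState {n : ℕ} (π : List (Transition n)) (q : Fin n) : Fin n := stateAt π q π.length

/-- The counter values after the first `i` transitions of `π`, starting from
counter values `u`. -/
def vecAt {n : ℕ} (π : List (Transition n)) (u : Vec2) (i : ℕ) : Vec2 :=
  u + effect (π.take i)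

/-- The path `π` is enabled in the configuration `(q, u)`: it starts at `q`
and all intermediate counter values are nonnegative. -/
def Enabled {n : ℕ} (π : List (Transition n)) (q : Fin n) (u : Vec2) : Prop :=
  startsAt π q ∧ ∀ i ≤ π.length, 0 ≤ vecAt π u i

/-- For `j ∈ {1,2}`, the path `π` is `{j}`-enabled in the configuration `(q, u)`:
it starts at `q` and the `j`-th coordinate of all intermediate counter values is
nonnegative. -/
def JEnabled {n : ℕ} (π : List (Transition n)) (q : Fin n) (u : Vec2) (j : Fin 2) : Prop :=
  startsAt π q ∧ ∀ i ≤ π.length, 0 ≤ proj j (vecAt π u i)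

/-- A run of `V`: a path of `V` enabled in the configuration `(q, u)`.
Its source is `(q, u)`, its target is `(endState π q, vecAt π u π.length)`,
and its configurations are `(stateAt π q i, vecAt π u i)` for `i ≤ π.length`. -/
def IsRun {n : ℕ} (V : VASS n) (π : List (Transition n)) (q : Fin n) (u : Vec2) : Prop :=
  IsPath V π ∧ Enabled π q u

/-- A (0,0)-run of `V`: a run whose source and target counter values are `(0,0)`. -/
def IsZeroRun {n : ℕ} (V : VASS n) (π : List (Transition n)) (q : Fin n) : Prop :=
  IsRun V π q 0 ∧ effect π = 0

/-- A cycle of `V`: a nonempty path of `V` whose starting and ending control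
states coincide. -/
def IsCycle {n : ℕ} (V : VASS n) (γ : List (Transition n)) : Prop :=
  IsPath V γ ∧ γ ≠ [] ∧ γ.head?.map (fun t => t.1) = γ.getLast?.map (fun t => t.2.2)

/-! ### Walks in weighted multigraphs -/

/-- The edge list `l` is a walk from `a` to `b`, where an edge `e` goes from `s e` to `t e`. -/
def IsWalk {α ε : Type*} (s t : ε → α) : α → List ε → α → Prop
  | a, [], b => a = b
  | a, e :: l, b => s e = a ∧ IsWalk s t (t e) l b

section Walk

variable {α ε : Type*} {s t : ε → α}

theorem isWalk_append {l l' : List ε} {a c : α} :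
    IsWalk s t a (l ++ l') c ↔ ∃ b, IsWalk s t a l b ∧ IsWalk s t b l' c := by
  induction l generalizing a with
  | nil => simp [IsWalk]
  | cons e l ih => simp [IsWalk, ih, and_assoc]

theorem IsWalk.of_getElem {l : List ε} {a c : α} (h : IsWalk s t a l c) {i : ℕ}
    (hi : i < l.length) :
    IsWalk s t a (l.take i) (s l[i]) ∧ IsWalk s t (s l[i]) (l.drop i) c := by
  rw [← List.take_append_drop i l, isWalk_append] at h
  obtain ⟨b, h₁, h₂⟩ := h
  rw [List.drop_eq_getElem_cons hi] at h₂ ⊢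
  obtain rfl := h₂.1
  exact ⟨h₁, h₂⟩

/-- A walk with all edge sources in `S` whose weight exceeds that of any `S.card` edges
contains the edges of a short closed walk of positive weight. -/
theorem IsWalk.exists_short_positive_closed (w : ε → ℤ) (M : ℕ) (S : Finset α)
    (l : List ε) (a b : α) (h : IsWalk s t a l b) (hS : ∀ e ∈ l, s e ∈ S)
    (hM : ∀ e ∈ l, w e ≤ M) (hw : (S.card * M : ℤ) < (l.map w).sum) :
    ∃ c l', IsWalk s t c l' c ∧ (∀ e ∈ l', e ∈ l) ∧ l'.length ≤ S.card ∧ 0 < (l'.map w).sum := by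
  induction hN : l.length using Nat.strong_induction_on generalizing l with | _ N ih
  by_cases hlen : l.length ≤ S.card
  · have hle : (l.map w).sum ≤ (l.map w).length • (M : ℤ) :=
      List.sum_le_card_nsmul _ _ (by simpa using hM)
    have : ((l.length : ℤ)) * M ≤ S.card * M := by gcongr
    simp only [List.length_map, nsmul_eq_mul] at hle
    linarith
  · have hlen' : S.card + 1 ≤ l.length := by omega
    obtain ⟨i, -, k, -, hne, hik⟩ := Finset.exists_ne_map_eq_of_card_lt_of_maps_to
      (s := (Finset.univ : Finset (Fin (S.card + 1)))) (t := S) (by simp)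
      (f := fun i => s (l[i.1]'(by omega))) (fun i _ => hS _ (List.getElem_mem _))
    wlog hlt : i.1 < k.1 generalizing i k
    · exact this k i hne.symm hik.symm (by have := Fin.val_ne_of_ne hne; omega)
    obtain ⟨i, hi⟩ := i
    obtain ⟨k, hk⟩ := k
    simp only at hik hlt
    have hkl : k < l.length := by omega
    obtain ⟨h₁, h₂⟩ := h.of_getElem (i := k) hkl
    have hik' : i < (l.take k).length := by simp; omega
    obtain ⟨h₃, h₄⟩ := h₁.of_getElem hik'
    simp only [List.getElem_take] at h₃ h₄
    set p := (l.take k).take i with hp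
    set m := (l.take k).drop i with hm
    set r := l.drop k with hr
    have hl : l = p ++ m ++ r := by simp only [hp, hm, hr, List.take_append_drop]
    have hmlen : m.length = k - i := by simp [hm]; omega
    rw [← hik] at h₄ h₂
    by_cases hpos : 0 < (m.map w).sum
    · exact ⟨_, m, h₄, fun e he => by rw [hl]; simp [he], by omega, hpos⟩
    · have hsub : ∀ e ∈ p ++ r, e ∈ l := fun e he => by
        rw [hl]; simp only [List.mem_append] at he ⊢; tauto
      have hdec : (p ++ r).length < l.length := by rw [hl]; simp; omega
      have hsum : (l.map w).sum = (p.map w).sum + (m.map w).sum + (r.map w).sum := by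
        rw [hl]; simp [add_assoc]
      obtain ⟨c, l', hc, hl', hlen, hpos'⟩ :=
        ih _ (hN ▸ hdec) (p ++ r) (isWalk_append.2 ⟨_, h₃, h₂⟩) (fun e he => hS e (hsub e he))
          (fun e he => hM e (hsub e he)) (by simp; linarith) rfl
      exact ⟨c, l', hc, fun e he => hsub e (hl' e he), hlen, hpos'⟩

/-- A closed walk of positive weight can be rotated so that all its prefixes have
nonnegative weight. -/
theorem IsWalk.exists_rotation_nonneg (w : ε → ℤ) {l : List ε} {a : α}
    (h : IsWalk s t a l a) (hw : 0 < (l.map w).sum) :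
    ∃ c l', IsWalk s t c l' c ∧ l'.Perm l ∧ ∀ i, 0 ≤ ((l'.take i).map w).sum := by
  obtain ⟨k, -, hk⟩ := Finset.exists_min_image (Finset.range (l.length + 1))
    (fun k => ((l.take k).map w).sum) ⟨0, by simp⟩
  replace hk : ∀ i, ((l.take k).map w).sum ≤ ((l.take i).map w).sum := fun i => by
    rcases le_total i l.length with hi | hi
    · exact hk i (by simp; omega)
    · rw [List.take_of_length_le hi]
      simpa using hk l.length (by simp)
  have hl := List.take_append_drop k l
  rw [← hl, isWalk_append] at h
  obtain ⟨c, h₁, h₂⟩ := h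
  refine ⟨c, l.drop k ++ l.take k, isWalk_append.2 ⟨a, h₂, h₁⟩, ?_, fun i => ?_⟩
  · exact List.perm_append_comm.trans (by rw [hl])
  · have hsum : (l.map w).sum = ((l.take k).map w).sum + ((l.drop k).map w).sum := by
      rw [← List.sum_append, ← List.map_append, hl]
    rw [List.take_append]
    rcases le_total i (l.drop k).length with hi | hi
    · have := hk (k + i)
      rw [List.take_add] at this
      simp only [Nat.sub_eq_zero_of_le hi, List.take_zero, List.append_nil]
      simp only [List.map_append, List.sum_append] at this
      linarith
    · rw [List.take_of_length_le hi, List.take_take]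
      have := hk (min (i - (l.drop k).length) k)
      simp only [List.map_append, List.sum_append]
      linarith

end Walk

/-! ### Projections and runs -/

theorem proj_add (j : Fin 2) (v w : Vec2) : proj j (v + w) = proj j v + proj j w := by
  unfold proj; split <;> rfl

theorem proj_le_vnorm (j : Fin 2) (v : Vec2) : proj j v ≤ vnorm v := by
  unfold proj vnorm; split <;> omega

theorem nonneg_iff_proj (j : Fin 2) (v : Vec2) : 0 ≤ v ↔ 0 ≤ proj j v ∧ 0 ≤ proj (1 - j) v := by
  rw [Prod.le_def]
  fin_cases j <;> simp [proj, and_comm]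

theorem vnorm_eq_of_nonneg (j : Fin 2) {v : Vec2} (hv : 0 ≤ v) :
    (vnorm v : ℤ) = max (proj j v) (proj (1 - j) v) := by
  obtain ⟨h₁, h₂⟩ := Prod.le_def.1 hv
  simp only [Prod.fst_zero, Prod.snd_zero] at h₁ h₂
  fin_cases j <;> simp [proj, vnorm, abs_of_nonneg h₁, abs_of_nonneg h₂, max_comm]

theorem vert_or_horiz_of_proj {j : Fin 2} {v : Vec2} (h₀ : proj j v = 0)
    (h₁ : 0 < proj (1 - j) v) : Vert v ∨ Horiz v := by
  fin_cases j
  · exact Or.inl ⟨by simpa [proj] using h₀, by simpa [proj] using h₁⟩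
  · exact Or.inr ⟨by simpa [proj] using h₁, by simpa [proj] using h₀⟩

section Lift

variable {n : ℕ}

theorem effect_cons (t : Transition n) (π : List (Transition n)) :
    effect (t :: π) = t.2.1 + effect π := by simp [effect]

theorem vecAt_cons_succ (t : Transition n) (π : List (Transition n)) (u : Vec2) (i : ℕ) :
    vecAt (t :: π) u (i + 1) = vecAt π (u + t.2.1) i := by
  simp [vecAt, effect_cons, add_assoc]

theorem stateAt_cons_succ (t : Transition n) (π : List (Transition n)) (q : Fin n) (i : ℕ) :
    stateAt (t :: π) q (i + 1) = stateAt π t.2.2 i := by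
  unfold stateAt
  rw [List.take_succ_cons, List.getLast?_cons]
  cases (π.take i).getLast? <;> simp

theorem proj_effect (j : Fin 2) (π : List (Transition n)) :
    proj j (effect π) = (π.map fun t => proj j t.2.1).sum := by
  induction π with
  | nil => simp [effect, proj]
  | cons t π ih => simp [effect_cons, proj_add, ih]

/-- Source of a transition taken at a given value of coordinate `j`. -/
def levelSource (e : Transition n × ℤ) : Fin n × ℤ := (e.1.1, e.2)

/-- Target of a transition taken at a given value of coordinate `j`. -/
def levelTarget (j : Fin 2) (e : Transition n × ℤ) : Fin n × ℤ :=
  (e.1.2.2, e.2 + proj j e.1.2.1)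

/-- Annotates each transition of a path with the value of coordinate `j` at which it is taken. -/
def liftPath (j : Fin 2) : ℤ → List (Transition n) → List (Transition n × ℤ)
  | _, [] => []
  | x, t :: π => (t, x) :: liftPath j (x + proj j t.2.1) π

theorem map_fst_liftPath (j : Fin 2) (x : ℤ) (π : List (Transition n)) :
    (liftPath j x π).map Prod.fst = π := by
  induction π generalizing x with
  | nil => rfl
  | cons t π ih => simp [liftPath, ih]

theorem mem_liftPath {j : Fin 2} {π : List (Transition n)} {q : Fin n} {u : Vec2}
    (hchain : π.IsChain fun s t => s.2.2 = t.1) (hq : startsAt π q)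
    {e : Transition n × ℤ} (he : e ∈ liftPath j (proj j u) π) :
    ∃ i ≤ π.length, stateAt π q i = e.1.1 ∧ proj j (vecAt π u i) = e.2 := by
  induction π generalizing q u with
  | nil => simp [liftPath] at he
  | cons t π ih =>
    rw [liftPath, List.mem_cons, ← proj_add] at he
    rw [List.isChain_cons] at hchain
    rcases he with rfl | he
    · exact ⟨0, by simp, by simpa [stateAt] using (hq t (by simp)).symm,
        by simp [vecAt, effect]⟩
    · obtain ⟨i, hi, h₁, h₂⟩ := ih hchain.2 (fun s hs => (hchain.1 s hs).symm) he
      exact ⟨i + 1, by simpa using hi, by rw [stateAt_cons_succ, h₁],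
        by rw [vecAt_cons_succ, h₂]⟩

theorem isWalk_liftPath (j : Fin 2) {π : List (Transition n)} {q : Fin n} (x : ℤ)
    (hchain : π.IsChain fun s t => s.2.2 = t.1) (hq : startsAt π q) :
    ∃ b, IsWalk levelSource (levelTarget j) (q, x) (liftPath j x π) b := by
  induction π generalizing q x with
  | nil => exact ⟨_, rfl⟩
  | cons t π ih =>
    rw [List.isChain_cons] at hchain
    obtain ⟨b, hb⟩ := ih (x + proj j t.2.1) hchain.2 (fun s hs => (hchain.1 s hs).symm)
    exact ⟨b, by simp [levelSource, hq t (by simp)], hb⟩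

theorem IsWalk.startsAt {j : Fin 2} {l : List (Transition n × ℤ)} {a b : Fin n × ℤ}
    (h : IsWalk levelSource (levelTarget j) a l b) : startsAt (l.map Prod.fst) a.1 := by
  cases l with
  | nil => simp [_root_.startsAt]
  | cons e l =>
    obtain rfl := h.1
    simp [_root_.startsAt, levelSource]

theorem IsWalk.isChain {j : Fin 2} {l : List (Transition n × ℤ)} {a b : Fin n × ℤ}
    (h : IsWalk levelSource (levelTarget j) a l b) :
    (l.map Prod.fst).IsChain fun s t => s.2.2 = t.1 := by
  induction l generalizing a with
  | nil => simp
  | cons e l ih =>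
    rw [List.map_cons, List.isChain_cons]
    exact ⟨fun s hs => (h.2.startsAt s hs).symm, ih h.2⟩

theorem IsWalk.snd_eq {j : Fin 2} {l : List (Transition n × ℤ)} {a b : Fin n × ℤ}
    (h : IsWalk levelSource (levelTarget j) a l b) :
    b.2 = a.2 + proj j (effect (l.map Prod.fst)) := by
  induction l generalizing a with
  | nil => obtain rfl : a = b := h; simp [effect, proj]
  | cons e l ih =>
    obtain rfl := h.1
    rw [ih h.2, List.map_cons, effect_cons, proj_add]
    simp [levelSource, levelTarget, add_assoc]

theorem IsWalk.getLast?_eq {j : Fin 2} {l : List (Transition n × ℤ)} {a b : Fin n × ℤ}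
    (h : IsWalk levelSource (levelTarget j) a l b) (hl : l ≠ []) :
    (l.map Prod.fst).getLast?.map (fun t => t.2.2) = some b.1 := by
  obtain ⟨l, e, rfl⟩ := List.eq_nil_or_concat l |>.resolve_left hl
  rw [List.concat_eq_append, isWalk_append] at h
  obtain ⟨c, -, -, h⟩ := h
  obtain rfl : levelTarget j e = b := h
  simp [levelTarget]

theorem IsWalk.isCycle {V : VASS n} {j : Fin 2} {l : List (Transition n × ℤ)} {a : Fin n × ℤ}
    (h : IsWalk levelSource (levelTarget j) a l a) (hl : l ≠ []) (hV : ∀ e ∈ l, e.1 ∈ V) :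
    IsCycle V (l.map Prod.fst) := by
  refine ⟨⟨by simpa using fun t x hx => hV (t, x) hx, h.isChain⟩, by simpa using hl, ?_⟩
  rw [h.getLast?_eq hl]
  cases l with
  | nil => exact absurd rfl hl
  | cons e l =>
    obtain rfl := h.1
    simp [levelSource]

/-- A closed walk whose levels and prefix effects are nonnegative is enabled wherever its
starting vertex is visited. -/
theorem IsWalk.enabled {j : Fin 2} {l : List (Transition n × ℤ)} {a : Fin n × ℤ}
    (h : IsWalk levelSource (levelTarget j) a l a) (ha : 0 ≤ a.2) (hlevel : ∀ e ∈ l, 0 ≤ e.2)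
    (hprefix : ∀ i, 0 ≤ ((l.take i).map fun e => proj (1 - j) e.1.2.1).sum)
    {v : Vec2} (hv : 0 ≤ v) (hva : proj j v = a.2) : Enabled (l.map Prod.fst) a.1 v := by
  refine ⟨h.startsAt, fun i hi => ?_⟩
  rw [nonneg_iff_proj j, vecAt, proj_add, proj_add, ← List.map_take]
  refine ⟨?_, ?_⟩
  · rcases (by simpa using hi : i ≤ l.length).lt_or_eq with hi | rfl
    · rw [hva, ← (h.of_getElem hi).1.snd_eq]
      exact hlevel _ (List.getElem_mem hi)
    · rwa [List.take_length, hva, ← h.snd_eq]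
  · rw [proj_effect, List.map_map]
    exact add_nonneg ((nonneg_iff_proj j v).1 hv).2 (hprefix i)

end Lift

/-- There is a polynomial `q` with natural coefficients such
that if along a run `ρ` of a 2-VASS `V` (with `n` states and norm `M`) some
fixed coordinate `j` stays smaller than `K` in every configuration, and the
norm of the target exceeds the norm of the source by more than `K·n·M`,
then some configuration in `ρ` enables a cycle whose effect is vertical or
horizontal and whose length is at most `q(K·n·M)`. -/
theorem one_coordinate_bounded_short_cycle :
    ∃ qp : Polynomial ℕ,
      ∀ (n : ℕ) (V : VASS n) (π : List (Transition n)) (q : Fin n) (u : Vec2)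
        (K : ℕ) (j : Fin 2),
        IsRun V π q u →
        (∀ i ≤ π.length, proj j (vecAt π u i) < (K : ℤ)) →
        vnorm u + K * n * vassNorm V < vnorm (vecAt π u π.length) →
        ∃ i ≤ π.length, ∃ γ : List (Transition n),
          IsCycle V γ ∧ Enabled γ (stateAt π q i) (vecAt π u i) ∧
          (Vert (effect γ) ∨ Horiz (effect γ)) ∧
          γ.length ≤ qp.eval (K * n * vassNorm V) := by
  refine ⟨Polynomial.X, fun n V π q u K j hrun hK hgrow => ?_⟩
  obtain ⟨⟨hV, hchain⟩, hstart, hnonneg⟩ := hrun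
  have hmem : ∀ e ∈ liftPath j (proj j u) π, e.1 ∈ V := fun e he =>
    hV _ (by rw [← map_fst_liftPath j (proj j u) π]; exact List.mem_map_of_mem he)
  have hstep : ∀ t ∈ V, proj (1 - j) t.2.1 ≤ vassNorm V := fun t ht =>
    (proj_le_vnorm _ _).trans (by exact_mod_cast Finset.le_sup (f := fun t => vnorm t.2.1) ht)
  obtain ⟨b, hwalk⟩ := isWalk_liftPath j (proj j u) hchain hstart
  let S : Finset (Fin n × ℤ) := Finset.univ ×ˢ Finset.Ico 0 (K : ℤ)
  have hcard : S.card = K * n := by simp [S, mul_comm]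
  have hS : ∀ e ∈ liftPath j (proj j u) π, levelSource e ∈ S := fun e he => by
    obtain ⟨i, hi, -, h⟩ := mem_liftPath hchain hstart he
    have h₀ := ((nonneg_iff_proj j _).1 (hnonneg i hi)).1
    simp only [S, levelSource, Finset.mem_product, Finset.mem_univ, Finset.mem_Ico, true_and]
    exact h ▸ ⟨h₀, hK i hi⟩
  have hn : 1 ≤ n := q.pos
  have hK₁ : 1 ≤ K := by
    have := ((nonneg_iff_proj j _).1 (hnonneg 0 (by simp))).1
    have := hK 0 (by simp)
    omega
  have hM : 1 ≤ vassNorm V := by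
    by_contra! hM
    have hzero : effect π = 0 := List.sum_eq_zero fun v hv => by
      obtain ⟨t, ht, rfl⟩ := List.mem_map.1 hv
      have : vnorm t.2.1 ≤ vassNorm V := Finset.le_sup (f := fun t => vnorm t.2.1) (hV t ht)
      have : max t.2.1.1.natAbs t.2.1.2.natAbs ≤ 0 := by rw [← vnorm]; omega
      ext <;> simp <;> omega
    rw [vecAt, List.take_length, hzero, add_zero] at hgrow
    omega
  have hgain : (K * n * vassNorm V : ℤ) < proj (1 - j) (effect π) := by
    have hle : K * 1 * 1 ≤ K * n * vassNorm V := by gcongr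
    have hend := vnorm_eq_of_nonneg j (hnonneg _ le_rfl)
    have hbound := hK _ le_rfl
    have hsrc := proj_le_vnorm (1 - j) u
    have hsplit : proj (1 - j) (vecAt π u π.length) =
        proj (1 - j) u + proj (1 - j) (effect π) := by
      rw [vecAt, List.take_length, proj_add]
    zify at hle hgrow
    rcases max_cases (proj j (vecAt π u π.length)) (proj (1 - j) (vecAt π u π.length)) <;>
      linarith
  have hweight : ((liftPath j (proj j u) π).map fun e => proj (1 - j) e.1.2.1).sum =
      proj (1 - j) (effect π) := by
    conv_rhs => rw [← map_fst_liftPath j (proj j u) π, proj_effect, List.map_map]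
    rfl
  obtain ⟨c, l, hl, hsub, hlen, hpos⟩ := hwalk.exists_short_positive_closed
    (fun e => proj (1 - j) e.1.2.1) (vassNorm V) S _ _ _ hS
    (fun e he => hstep _ (hmem e he)) (by rw [hcard, hweight]; exact_mod_cast hgain)
  obtain ⟨a, l', hl', hperm, hprefix⟩ := hl.exists_rotation_nonneg _ hpos
  replace hsub : ∀ e ∈ l', e ∈ liftPath j (proj j u) π := fun e he => hsub e (hperm.mem_iff.1 he)
  have hpos' : 0 < (l'.map fun e => proj (1 - j) e.1.2.1).sum := by
    rwa [(hperm.map _).sum_eq]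
  have hne : l' ≠ [] := by rintro rfl; simp at hpos'
  obtain ⟨e, r, rfl⟩ := List.exists_cons_of_ne_nil hne
  obtain rfl := hl'.1
  obtain ⟨i, hi, hstate, hvec⟩ := mem_liftPath hchain hstart (hsub e (by simp))
  have hlevel : ∀ e' ∈ e :: r, 0 ≤ e'.2 := fun e' he' => by
    have := hS e' (hsub e' he')
    simp only [S, levelSource, Finset.mem_product, Finset.mem_Ico] at this
    exact this.2.1
  refine ⟨i, hi, (e :: r).map Prod.fst, hl'.isCycle hne fun e' he' => hmem e' (hsub e' he'),
    ?_, vert_or_horiz_of_proj (j := j) ?_ ?_, ?_⟩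
  · rw [hstate]
    exact hl'.enabled (hlevel e (by simp)) hlevel hprefix (hnonneg i hi) hvec
  · have := hl'.snd_eq
    omega
  · rw [proj_effect, List.map_map]
    exact hpos'
  · rw [Polynomial.eval_X, List.length_map, hperm.length_eq]
    exact (hlen.trans_eq hcard).trans (Nat.le_mul_of_pos_right _ hM)
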